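/- arXiv:2603.15854 — 2 statements merged into one kernel-verified Lean document; each statement's English description precedes it below -/
import Mathlib

section
/- (Exactness of sequential/online hierarchical sampling.) Let V ≥ 1, let ℓ ∈ ℝ^V, and let G_0, …, G_{m-1} be a partition of {1, …, V} into nonempty sets with group log-masses L_k = log Σ_{j∈G_k} exp(ℓ_j). Let Z_0, …, Z_{m-1}, U_1, …, U_{m-1} be mutually independent random variables such that each Z_k is distributed according to the softmax of ℓ restricted to G_k and each U_k is uniform on (0,1). Define recursively W_0 = Z_0 and, for 1 ≤ k ≤ m-1, W_k = Z_k if U_k < exp(L_k)/(Σ_{s=0}^{k} exp(L_s)) and W_k = W_{k-1} otherwise. Then W_{m-1} is distributed according to softmax(ℓ); that is, for every i ∈ {1, …, V}, P(W_{m-1} = i) = exp(ℓ_i) / Σ_{j=1}^V exp(ℓ_j). -/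
open MeasureTheory

/-!
Merging the groups one at a time is weighted reservoir sampling. Write `w k = exp (L k)` and
`p = w (k + 1) / ∑ s ≤ k + 1, w s`. Since `U (k + 1)` is independent of the draw `Z (k + 1)` and of
the current sample `W k`, the law of `W (k + 1)` is `p • law (Z (k + 1)) + (1 - p) • law (W k)`, so
by induction the law of `W k` is the mixture of the laws of `Z 0, …, Z k` with weights proportional
to `w`. The weight `w s` is the normalizing constant of the softmax on `G s`, hence the mixture is
the softmax on `G 0 ∪ … ∪ G k`.
-/

open ProbabilityTheory Finset

section Independence

variable {Ω α β γ κ : Type*} [MeasurableSpace Ω] [MeasurableSpace α] [MeasurableSpace β]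
  [MeasurableSpace γ] [Fintype κ] {P : Measure Ω}

lemma indepFun_prodMk_left_of_prodMk_right [IsFiniteMeasure P] {X : Ω → α} {Y : Ω → β} {Z : Ω → γ}
    (hX : Measurable X) (hY : Measurable Y) (hZ : Measurable Z)
    (hXYZ : IndepFun X (fun ω => (Y ω, Z ω)) P) (hYZ : IndepFun Y Z P) :
    IndepFun (fun ω => (X ω, Y ω)) Z P := by
  have hXY : IndepFun X Y P := hXYZ.comp measurable_id measurable_fst
  rw [indepFun_iff_map_prod_eq_prod_map_map (by fun_prop) (by fun_prop)] at hXYZ hYZ hXY ⊢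
  calc P.map (fun ω => ((X ω, Y ω), Z ω))
      = (P.map fun ω => (X ω, (Y ω, Z ω))).map MeasurableEquiv.prodAssoc.symm := by
        rw [Measure.map_map (by fun_prop) (by fun_prop)]
        rfl
    _ = ((P.map X).prod (P.map Y)).prod (P.map Z) := by
        rw [hXYZ, hYZ, ← Measure.prodAssoc_prod, MeasurableEquiv.map_symm_map]
    _ = (P.map fun ω => (X ω, Y ω)).prod (P.map Z) := by rw [hXY]

lemma map_prodMk_eq_prod_pi_of_singleton_Iic [IsFiniteMeasure P] [Countable α]
    [MeasurableSingletonClass α] {X : Ω → α} (hX : Measurable X) {Y : κ → Ω → ℝ}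
    (hY : ∀ k, Measurable (Y k)) (ν : Measure α) [SigmaFinite ν]
    (h : ∀ (x : α) (t : κ → ℝ),
      P {ω | X ω = x ∧ ∀ k, Y k ω ≤ t k} = ν {x} * ∏ k, P {ω | Y k ω ≤ t k}) :
    P.map (fun ω => (X ω, fun k => Y k ω)) = ν.prod (Measure.pi fun k => P.map (Y k)) := by
  have hray (t : κ → ℝ) : (P.restrict {ω | ∀ k, Y k ω ≤ t k}).map X
      = (∏ k, P {ω | Y k ω ≤ t k}) • ν := by
    refine Measure.ext_of_singleton fun x => ?_
    rw [Measure.map_apply hX (measurableSet_singleton x),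
      Measure.restrict_apply (hX (measurableSet_singleton x)), Measure.smul_apply, smul_eq_mul,
      mul_comm, ← h]
    rfl
  let spanningIic (k : κ) : (P.map (Y k)).FiniteSpanningSetsIn (Set.range Set.Iic) :=
    { set := fun n => Set.Iic (n : ℝ)
      set_mem := fun n => ⟨n, rfl⟩
      finite := fun n => measure_lt_top _ _
      spanning := Set.iUnion_eq_univ_iff.2 exists_nat_ge }
  have hIic (_ : κ) : MeasurableSpace.generateFrom (Set.range Set.Iic)
      = (inferInstance : MeasurableSpace ℝ) :=
    (BorelSpace.measurable_eq.trans (borel_eq_generateFrom_Iic ℝ)).symm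
  refine (Measure.prod_eq_generateFrom MeasurableSpace.generateFrom_measurableSet
    (generateFrom_eq_pi hIic fun k => (spanningIic k).isCountablySpanning)
    MeasurableSpace.isPiSystem_measurableSet (IsPiSystem.pi fun _ => isPiSystem_Iic)
    ν.toFiniteSpanningSetsIn (Measure.FiniteSpanningSetsIn.pi spanningIic) ?_).symm
  rintro s hs _ ⟨r, hr, rfl⟩
  choose t ht using fun k => hr k (Set.mem_univ k)
  obtain rfl : (fun k => Set.Iic (t k)) = r := funext ht
  calc P.map (fun ω => (X ω, fun k => Y k ω)) (s ×ˢ Set.univ.pi fun k => Set.Iic (t k))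
      = (P.restrict {ω | ∀ k, Y k ω ≤ t k}).map X s := by
        rw [Measure.map_apply (by fun_prop)
            (hs.prod (MeasurableSet.univ_pi fun _ => measurableSet_Iic)),
          Measure.map_apply hX hs, Measure.restrict_apply (hX hs)]
        congr 1
        ext ω
        simp [Pi.le_def]
    _ = ν s * ∏ k, P {ω | Y k ω ≤ t k} := by
        rw [hray, Measure.smul_apply, smul_eq_mul, mul_comm]
    _ = ν s * Measure.pi (fun k => P.map (Y k)) (Set.univ.pi fun k => Set.Iic (t k)) := by
        simp only [Measure.pi_pi, Measure.map_apply (hY _) measurableSet_Iic]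
        rfl

variable [IsProbabilityMeasure P]

lemma indepFun_and_iIndepFun_of_singleton_Iic [Countable α] [MeasurableSingletonClass α]
    {X : Ω → α} (hX : Measurable X) {Y : κ → Ω → ℝ} (hY : ∀ k, Measurable (Y k))
    (ν : Measure α) [IsProbabilityMeasure ν]
    (h : ∀ (x : α) (t : κ → ℝ),
      P {ω | X ω = x ∧ ∀ k, Y k ω ≤ t k} = ν {x} * ∏ k, P {ω | Y k ω ≤ t k}) :
    IndepFun X (fun ω k => Y k ω) P ∧ iIndepFun Y P := by
  have (k : κ) : IsProbabilityMeasure (P.map (Y k)) :=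
    Measure.isProbabilityMeasure_map (hY k).aemeasurable
  have hjoint := map_prodMk_eq_prod_pi_of_singleton_Iic hX hY ν h
  have hmapX : P.map X = ν := by
    simpa only [Measure.map_map measurable_fst (hX.prodMk (measurable_pi_lambda _ hY)),
      Function.comp_def, Measure.map_fst_prod, measure_univ, one_smul]
      using congrArg (Measure.map Prod.fst) hjoint
  have hmapY : P.map (fun ω k => Y k ω) = Measure.pi fun k => P.map (Y k) := by
    simpa only [Measure.map_map measurable_snd (hX.prodMk (measurable_pi_lambda _ hY)),
      Function.comp_def, Measure.map_snd_prod, measure_univ, one_smul]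
      using congrArg (Measure.map Prod.snd) hjoint
  exact ⟨(indepFun_iff_map_prod_eq_prod_map_map hX.aemeasurable (by fun_prop)).2
      (by rw [hjoint, hmapX, hmapY]),
    (iIndepFun_iff_map_fun_eq_pi_map fun k => (hY k).aemeasurable).2 hmapY⟩

lemma indepFun_and_iIndepFun_of_pi_singleton_Iic {ι : Type*} [Fintype ι] [Countable α]
    [MeasurableSingletonClass α] {Z : ι → Ω → α} (hZ : ∀ i, Measurable (Z i)) {U : κ → Ω → ℝ}
    {p : κ → Prop} [DecidablePred p] (hU : ∀ k, p k → Measurable (U k))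
    (h : ∀ (z : ι → α) (t : κ → ℝ),
      P {ω | (∀ i, Z i ω = z i) ∧ ∀ k, p k → U k ω ≤ t k}
        = (∏ i, P {ω | Z i ω = z i}) * ∏ k ∈ univ.filter p, P {ω | U k ω ≤ t k}) :
    IndepFun (fun ω i => Z i ω) (fun ω (k : {k // p k}) => U k ω) P
      ∧ iIndepFun (fun k : {k // p k} => U k) P := by
  have (i : ι) : IsProbabilityMeasure (P.map (Z i)) :=
    Measure.isProbabilityMeasure_map (hZ i).aemeasurable
  refine indepFun_and_iIndepFun_of_singleton_Iic (measurable_pi_lambda _ hZ)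
    (fun k => hU k k.2) (Measure.pi fun i => P.map (Z i)) fun z t => ?_
  have hpoint : Measure.pi (fun i => P.map (Z i)) {z} = ∏ i, P {ω | Z i ω = z i} := by
    simp only [Measure.pi_singleton, Measure.map_apply (hZ _) (measurableSet_singleton _)]
    rfl
  have hz := h z fun k => if hk : p k then t ⟨k, hk⟩ else 0
  rw [prod_subtype (F := inferInstance) (univ.filter p) (p := p) (by simp)] at hz
  have hp (k : {k // p k}) : p k := k.2
  simpa +contextual [hpoint, funext_iff, hp] using hz

end Independence

section UniformThreshold

variable {Ω E : Type*} [MeasurableSpace Ω] [MeasurableSpace E] {P : Measure Ω}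

lemma measureReal_uniform_Iio {T : Ω → ℝ} (hT : Measurable T)
    (hTlaw : P.map T = volume.restrict (Set.Ioo (0 : ℝ) 1)) {p : ℝ} (hp : p ∈ Set.Icc (0 : ℝ) 1) :
    P.real (T ⁻¹' Set.Iio p) = p := by
  have hset : Set.Iio p ∩ Set.Ioo 0 1 = Set.Ioo 0 p := by
    ext x
    simp only [Set.mem_inter_iff, Set.mem_Iio, Set.mem_Ioo]
    exact ⟨fun h => ⟨h.2.1, h.1⟩, fun h => ⟨h.2, h.1, h.2.trans_le hp.2⟩⟩
  rw [← map_measureReal_apply hT measurableSet_Iio, hTlaw,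
    measureReal_restrict_apply measurableSet_Iio, hset, Real.volume_real_Ioo_of_le hp.1, sub_zero]

variable [IsProbabilityMeasure P]

lemma measureReal_preimage_ite_lt {X Y : Ω → E} {T : Ω → ℝ} (hY : Measurable Y)
    (hT : Measurable T) (hTlaw : P.map T = volume.restrict (Set.Ioo (0 : ℝ) 1))
    (hXT : IndepFun X T P) (hYT : IndepFun Y T P) {p : ℝ} (hp : p ∈ Set.Icc (0 : ℝ) 1)
    {s : Set E} (hs : MeasurableSet s) :
    P.real ((fun ω => if T ω < p then X ω else Y ω) ⁻¹' s)
      = p * P.real (X ⁻¹' s) + (1 - p) * P.real (Y ⁻¹' s) := by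
  have hlt : P.real (T ⁻¹' Set.Iio p) = p := measureReal_uniform_Iio hT hTlaw hp
  have hge : P.real (T ⁻¹' (Set.Iio p)ᶜ) = 1 - p := by
    rw [Set.preimage_compl, probReal_compl_eq_one_sub (hT measurableSet_Iio), hlt]
  have hsplit : (fun ω => if T ω < p then X ω else Y ω) ⁻¹' s
      = X ⁻¹' s ∩ T ⁻¹' Set.Iio p ∪ Y ⁻¹' s ∩ T ⁻¹' (Set.Iio p)ᶜ := by
    ext ω
    by_cases h : T ω < p
    · simp [h]
    · simp [h, not_lt.1 h]
  have hdisj : Disjoint (X ⁻¹' s ∩ T ⁻¹' Set.Iio p) (Y ⁻¹' s ∩ T ⁻¹' (Set.Iio p)ᶜ) :=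
    (disjoint_compl_right.preimage T).mono Set.inter_subset_right Set.inter_subset_right
  have hmul {S : Ω → E} (hS : IndepFun S T P) {B : Set ℝ} (hB : MeasurableSet B) :
      P.real (S ⁻¹' s ∩ T ⁻¹' B) = P.real (T ⁻¹' B) * P.real (S ⁻¹' s) := by
    simp only [measureReal_def, hS.measure_inter_preimage_eq_mul _ _ hs hB, ENNReal.toReal_mul,
      mul_comm]
  rw [hsplit, measureReal_union hdisj ((hY hs).inter (hT measurableSet_Iio.compl)),
    hmul hXT measurableSet_Iio, hmul hYT measurableSet_Iio.compl, hlt, hge]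

end UniformThreshold

/-- `W` is the sample process of weighted reservoir sampling: it starts at the first draw `Z 0`,
and the draw `Z (k + 1)` replaces the current sample with probability
`w (k + 1) / (w 0 + ⋯ + w (k + 1))`, as decided by `U k`, the variable `U (k + 1)` of the usual
numbering. -/
structure IsReservoirSample {Ω E : Type*} {n : ℕ} (w : Fin (n + 1) → ℝ) (Z : Fin (n + 1) → Ω → E)
    (U : Fin n → Ω → ℝ) (W : Fin (n + 1) → Ω → E) : Prop where
  zero : W 0 = Z 0
  succ (k : Fin n) : W k.succ = fun ω =>
    if U k ω < w k.succ / ∑ s ∈ Iic k.succ, w s then Z k.succ ω else W k.castSucc ω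

lemma isReservoirSample_of_forall_lt {Ω E : Type*} {n : ℕ} {w : Fin (n + 1) → ℝ}
    {Z W : Fin (n + 1) → Ω → E} {U : Fin (n + 1) → Ω → ℝ} (hzero : ∀ ω, W 0 ω = Z 0 ω)
    (hsucc : ∀ (k : ℕ) (h : k + 1 < n + 1) (ω : Ω), W ⟨k + 1, h⟩ ω =
      if U ⟨k + 1, h⟩ ω
          < w ⟨k + 1, h⟩ / ∑ s ∈ univ.filter (fun s : Fin (n + 1) => (s : ℕ) ≤ k + 1), w s
      then Z ⟨k + 1, h⟩ ω else W ⟨k, by omega⟩ ω) :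
    IsReservoirSample w Z (fun k => U k.succ) W := by
  refine ⟨funext hzero, fun k => funext fun ω => ?_⟩
  have hIic : univ.filter (fun s : Fin (n + 1) => (s : ℕ) ≤ k + 1) = Iic k.succ := by
    ext s
    simp [Fin.le_def]
  rw [← hIic]
  exact hsucc k k.succ.isLt ω

namespace IsReservoirSample

variable {Ω E : Type*} [MeasurableSpace E] {n : ℕ} {w : Fin (n + 1) → ℝ}
  {Z : Fin (n + 1) → Ω → E} {U : Fin n → Ω → ℝ} {W : Fin (n + 1) → Ω → E}

lemma exists_measurable_eq_history (hW : IsReservoirSample w Z U W) (k : Fin (n + 1)) :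
    ∃ φ : (Fin (n + 1) → E) × ({j : Fin n // j.castSucc < k} → ℝ) → E,
      Measurable φ ∧ W k = fun ω => φ (fun j => Z j ω, fun j => U j ω) := by
  induction k using Fin.induction with
  | zero => exact ⟨fun h => h.1 0, by fun_prop, hW.zero⟩
  | succ k ih =>
    obtain ⟨φ, hφ, hWφ⟩ := ih
    have hlt : k.castSucc < k.succ := k.castSucc_lt_succ
    refine ⟨fun h => if h.2 ⟨k, hlt⟩ < w k.succ / ∑ s ∈ Iic k.succ, w s then h.1 k.succ
      else φ (h.1, fun j => h.2 ⟨j, j.2.trans hlt⟩), ?_, ?_⟩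
    · exact Measurable.ite (measurableSet_lt (by fun_prop) (by fun_prop)) (by fun_prop)
        (by fun_prop)
    · rw [hW.succ, hWφ]

variable [MeasurableSpace Ω] {P : Measure Ω}

protected lemma measurable (hW : IsReservoirSample w Z U W) (hZ : ∀ k, Measurable (Z k))
    (hU : ∀ k, Measurable (U k)) (k : Fin (n + 1)) : Measurable (W k) := by
  obtain ⟨φ, hφ, hWφ⟩ := hW.exists_measurable_eq_history k
  rw [hWφ]
  fun_prop

variable [IsProbabilityMeasure P]

protected lemma indepFun (hW : IsReservoirSample w Z U W) (hZ : ∀ k, Measurable (Z k))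
    (hU : ∀ k, Measurable (U k)) (hZU : IndepFun (fun ω k => Z k ω) (fun ω k => U k ω) P)
    (hUindep : iIndepFun U P) (k : Fin n) : IndepFun (W k.castSucc) (U k) P := by
  obtain ⟨φ, hφ, hWφ⟩ := hW.exists_measurable_eq_history k.castSucc
  have hpast : IndepFun (fun ω (j : {j : Fin n // j.castSucc < k.castSucc}) => U j ω) (U k) P :=
    (hUindep.indepFun_finset (Iio k) {k} (by simp) hU).comp
      (φ := fun (u : Iio k → ℝ) (j : {j : Fin n // j.castSucc < k.castSucc}) =>
        u ⟨j.1, mem_Iio.2 (Fin.castSucc_lt_castSucc_iff.1 j.2)⟩)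
      (ψ := fun u : ({k} : Finset (Fin n)) → ℝ => u ⟨k, mem_singleton_self k⟩)
      (by fun_prop) (by fun_prop)
  have hdraws : IndepFun (fun ω k => Z k ω)
      (fun ω => (fun j : {j : Fin n // j.castSucc < k.castSucc} => U j ω, U k ω)) P :=
    hZU.comp (φ := id)
      (ψ := fun u : Fin n → ℝ => (fun j : {j : Fin n // j.castSucc < k.castSucc} => u j.1, u k))
      measurable_id (by fun_prop)
  have hhistory := indepFun_prodMk_left_of_prodMk_right (by fun_prop) (by fun_prop) (hU k)
    hdraws hpast
  rw [hWφ]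
  exact hhistory.comp hφ measurable_id

theorem sum_mul_measureReal_preimage (hW : IsReservoirSample w Z U W) (hw : ∀ k, 0 ≤ w k)
    (hZ : ∀ k, Measurable (Z k)) (hU : ∀ k, Measurable (U k))
    (hUlaw : ∀ k, P.map (U k) = volume.restrict (Set.Ioo (0 : ℝ) 1))
    (hZU : IndepFun (fun ω k => Z k ω) (fun ω k => U k ω) P) (hUindep : iIndepFun U P)
    {A : Set E} (hA : MeasurableSet A) (k : Fin (n + 1)) :
    (∑ s ∈ Iic k, w s) * P.real (W k ⁻¹' A) = ∑ s ∈ Iic k, w s * P.real (Z s ⁻¹' A) := by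
  have hIic (k : Fin n) (f : Fin (n + 1) → ℝ) :
      ∑ s ∈ Iic k.succ, f s = ∑ s ∈ Iic k.castSucc, f s + f k.succ := by
    rw [← sum_Iio_add_eq_sum_Iic]
    rfl
  induction k using Fin.induction with
  | zero =>
    have hIic_zero : Iic (0 : Fin (n + 1)) = {0} := by
      ext s
      simp
    simp only [hW.zero, hIic_zero, sum_singleton]
  | succ k ih =>
    set S := ∑ s ∈ Iic k.succ, w s
    have hpast : 0 ≤ ∑ s ∈ Iic k.castSucc, w s := sum_nonneg fun s _ => hw s
    have hle : w k.succ ≤ S := by linarith [hIic k w]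
    have hp : w k.succ / S ∈ Set.Icc (0 : ℝ) 1 :=
      ⟨div_nonneg (hw _) ((hw _).trans hle), div_le_one_of_le₀ hle ((hw _).trans hle)⟩
    have hSp : S * (w k.succ / S) = w k.succ :=
      mul_div_cancel_of_imp' fun hS => le_antisymm (hS ▸ hle) (hw _)
    have hZUk : IndepFun (Z k.succ) (U k) P :=
      hZU.comp (measurable_pi_apply k.succ) (measurable_pi_apply k)
    calc S * P.real (W k.succ ⁻¹' A)
        = S * (w k.succ / S * P.real (Z k.succ ⁻¹' A)
            + (1 - w k.succ / S) * P.real (W k.castSucc ⁻¹' A)) := by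
          rw [hW.succ, measureReal_preimage_ite_lt (hW.measurable hZ hU _) (hU k) (hUlaw k) hZUk
            (hW.indepFun hZ hU hZU hUindep k) hp hA]
      _ = w k.succ * P.real (Z k.succ ⁻¹' A)
            + (∑ s ∈ Iic k.castSucc, w s) * P.real (W k.castSucc ⁻¹' A) := by
          linear_combination (P.real (Z k.succ ⁻¹' A) - P.real (W k.castSucc ⁻¹' A)) * hSp
            + P.real (W k.castSucc ⁻¹' A) * hIic k w
      _ = ∑ s ∈ Iic k.succ, w s * P.real (Z s ⁻¹' A) := by
          rw [ih, hIic, add_comm]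

end IsReservoirSample

lemma sum_mass_mul_normalized_eq_ite {ι κ : Type*} [DecidableEq ι] {w : ι → ℝ} (hw : ∀ i, 0 ≤ w i)
    {G : κ → Finset ι} {K : Finset κ} (hG : (K : Set κ).PairwiseDisjoint G) (i : ι) :
    ∑ s ∈ K, (∑ j ∈ G s, w j) * (if i ∈ G s then w i / ∑ j ∈ G s, w j else 0)
      = if i ∈ K.biUnion G then w i else 0 := by
  have hterm (s : κ) : (∑ j ∈ G s, w j) * (if i ∈ G s then w i / ∑ j ∈ G s, w j else 0)
      = ∑ j ∈ G s, if i = j then w j else 0 := by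
    rw [sum_ite_eq]
    split_ifs with hi
    · exact mul_div_cancel_of_imp' fun h => (sum_eq_zero_iff_of_nonneg fun j _ => hw j).1 h i hi
    · exact mul_zero _
  rw [sum_congr rfl fun s _ => hterm s, ← sum_biUnion hG, sum_ite_eq]

theorem online_hierarchical_sampling_exact_general
    {Ω ι : Type*} [MeasurableSpace Ω] {P : Measure Ω} [IsProbabilityMeasure P]
    [DecidableEq ι] [MeasurableSpace ι] [MeasurableSingletonClass ι]
    {m : ℕ} (hm : 0 < m) (ℓ : ι → ℝ)
    (G : Fin m → Finset ι) (hGne : ∀ k, (G k).Nonempty)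
    (hGdisj : Pairwise fun k l => Disjoint (G k) (G l))
    (L : Fin m → ℝ) (hL : ∀ k, L k = Real.log (∑ j ∈ G k, Real.exp (ℓ j)))
    (Z : Fin m → Ω → ι) (hZmeas : ∀ k, Measurable (Z k))
    (U : Fin m → Ω → ℝ) (hUmeas : ∀ k : Fin m, k ≠ ⟨0, hm⟩ → Measurable (U k))
    (hZlaw : ∀ k, ∀ i, P {ω | Z k ω = i}
      = if i ∈ G k then ENNReal.ofReal (Real.exp (ℓ i) / ∑ j ∈ G k, Real.exp (ℓ j)) else 0)
    (hUlaw : ∀ k : Fin m, k ≠ ⟨0, hm⟩ →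
      Measure.map (U k) P = volume.restrict (Set.Ioo (0 : ℝ) 1))
    (hZU : IndepFun (fun ω k => Z k ω) (fun ω (k : {k : Fin m // k ≠ ⟨0, hm⟩}) => U k ω) P)
    (hUindep : iIndepFun (fun k : {k : Fin m // k ≠ ⟨0, hm⟩} => U k) P)
    (W : Fin m → Ω → ι)
    (hW0 : ∀ ω, W ⟨0, hm⟩ ω = Z ⟨0, hm⟩ ω)
    (hWrec : ∀ (k : ℕ) (h : k + 1 < m) (ω : Ω),
      W ⟨k + 1, h⟩ ω =
        if U ⟨k + 1, h⟩ ω <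
            Real.exp (L ⟨k + 1, h⟩)
              / ∑ s ∈ Finset.univ.filter (fun s : Fin m => (s : ℕ) ≤ k + 1), Real.exp (L s)
        then Z ⟨k + 1, h⟩ ω
        else W ⟨k, by omega⟩ ω)
    (k : Fin m) (i : ι) :
    P {ω | W k ω = i}
      = if i ∈ (Iic k).biUnion G then
          ENNReal.ofReal (Real.exp (ℓ i) / ∑ j ∈ (Iic k).biUnion G, Real.exp (ℓ j))
        else 0 := by
  obtain ⟨n, rfl⟩ := Nat.exists_eq_add_one.2 hm
  have hexpL (s : Fin (n + 1)) : Real.exp (L s) = ∑ j ∈ G s, Real.exp (ℓ j) := by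
    rw [hL, Real.exp_log (sum_pos (fun _ _ => Real.exp_pos _) (hGne s))]
  have hW : IsReservoirSample (fun k => Real.exp (L k)) Z (fun k => U k.succ) W :=
    isReservoirSample_of_forall_lt hW0 hWrec
  let e (k : Fin n) : {k : Fin (n + 1) // k ≠ ⟨0, hm⟩} := ⟨k.succ, k.succ_ne_zero⟩
  have he : Function.Injective e := fun _ _ h => Fin.succ_injective n (congrArg Subtype.val h)
  have hZUsucc : IndepFun (fun ω k => Z k ω) (fun ω (k : Fin n) => U k.succ ω) P :=
    hZU.comp (φ := id) (ψ := fun (u : {k : Fin (n + 1) // k ≠ ⟨0, hm⟩} → ℝ) k => u (e k))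
      measurable_id (by fun_prop)
  have hdraw (s : Fin (n + 1)) : P.real (Z s ⁻¹' {i})
      = if i ∈ G s then Real.exp (ℓ i) / ∑ j ∈ G s, Real.exp (ℓ j) else 0 := by
    have hlaw : P (Z s ⁻¹' {i}) = _ := hZlaw s i
    rw [measureReal_def, hlaw]
    split_ifs
    · exact ENNReal.toReal_ofReal (by positivity)
    · rfl
  have hmix : (∑ j ∈ (Iic k).biUnion G, Real.exp (ℓ j)) * P.real (W k ⁻¹' {i})
      = if i ∈ (Iic k).biUnion G then Real.exp (ℓ i) else 0 := by
    rw [sum_biUnion (hGdisj.set_pairwise _),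
      ← sum_mass_mul_normalized_eq_ite (fun j => (Real.exp_pos (ℓ j)).le)
        (hGdisj.set_pairwise _) i]
    simpa only [hexpL, hdraw] using hW.sum_mul_measureReal_preimage (fun _ => (Real.exp_pos _).le)
      hZmeas (fun k => hUmeas _ (e k).2) (fun k => hUlaw _ (e k).2)
      hZUsucc (hUindep.precomp he) (measurableSet_singleton i) k
  have hpos : 0 < ∑ j ∈ (Iic k).biUnion G, Real.exp (ℓ j) :=
    sum_pos (fun _ _ => Real.exp_pos _)
      ((hGne k).mono (subset_biUnion_of_mem G (mem_Iic.2 le_rfl)))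
  calc P (W k ⁻¹' {i}) = ENNReal.ofReal (P.real (W k ⁻¹' {i})) := (ofReal_measureReal ..).symm
    _ = _ := by
      rw [eq_div_of_mul_eq hpos.ne' ((mul_comm _ _).trans hmix)]
      split_ifs <;> simp

/-- **Exactness of sequential/online hierarchical sampling.** Let `G 0, …, G (m-1)` be
a partition of the index set into nonempty groups with log-masses
`L k = log ∑ j ∈ G k, exp (ℓ j)`. Let `Z 0, …, Z (m-1)` (each distributed as the
softmax of `ℓ` restricted to `G k`) and `U 1, …, U (m-1)` (uniform on `(0,1)`) be
mutually independent (independence expressed by the product rule on point events for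
the `Z k` and rays for the `U k`, which characterizes mutual independence here).
Define `W 0 = Z 0` and, for `1 ≤ k ≤ m-1`,
`W k = Z k` if `U k < exp (L k) / ∑_{s ≤ k} exp (L s)` and `W k = W (k-1)` otherwise.
Then `W (m-1)` is distributed according to `softmax ℓ`. -/
theorem online_hierarchical_sampling_exact
    {Ω : Type*} [MeasurableSpace Ω] {P : Measure Ω} [IsProbabilityMeasure P]
    {V m : ℕ} (hV : 1 ≤ V) (hm : 0 < m) (ℓ : Fin V → ℝ)
    (G : Fin m → Finset (Fin V)) (hGne : ∀ k, (G k).Nonempty)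
    (hGdisj : Pairwise fun k l => Disjoint (G k) (G l))
    (hGcover : ∀ i : Fin V, ∃ k, i ∈ G k)
    (L : Fin m → ℝ) (hL : ∀ k, L k = Real.log (∑ j ∈ G k, Real.exp (ℓ j)))
    (Z : Fin m → Ω → Fin V) (hZmeas : ∀ k, Measurable (Z k))
    (U : Fin m → Ω → ℝ) (hUmeas : ∀ k, Measurable (U k))
    (hZlaw : ∀ k, ∀ i : Fin V, P {ω | Z k ω = i}
      = if i ∈ G k then ENNReal.ofReal (Real.exp (ℓ i) / ∑ j ∈ G k, Real.exp (ℓ j)) else 0)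
    (hUlaw : ∀ k : Fin m, k ≠ ⟨0, hm⟩ →
      Measure.map (U k) P = volume.restrict (Set.Ioo (0 : ℝ) 1))
    (hindep : ∀ (z : Fin m → Fin V) (t : Fin m → ℝ),
      P {ω | (∀ k, Z k ω = z k) ∧ ∀ k : Fin m, k ≠ ⟨0, hm⟩ → U k ω ≤ t k}
        = (∏ k : Fin m, P {ω | Z k ω = z k})
            * ∏ k ∈ Finset.univ.filter (fun k : Fin m => k ≠ ⟨0, hm⟩),
                P {ω | U k ω ≤ t k})
    (W : Fin m → Ω → Fin V)
    (hW0 : ∀ ω, W ⟨0, hm⟩ ω = Z ⟨0, hm⟩ ω)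
    (hWrec : ∀ (k : ℕ) (h : k + 1 < m) (ω : Ω),
      W ⟨k + 1, h⟩ ω =
        if U ⟨k + 1, h⟩ ω <
            Real.exp (L ⟨k + 1, h⟩)
              / ∑ s ∈ Finset.univ.filter (fun s : Fin m => (s : ℕ) ≤ k + 1), Real.exp (L s)
        then Z ⟨k + 1, h⟩ ω
        else W ⟨k, by omega⟩ ω) :
    ∀ i : Fin V, P {ω | W ⟨m - 1, by omega⟩ ω = i}
      = ENNReal.ofReal (Real.exp (ℓ i) / ∑ j : Fin V, Real.exp (ℓ j)) := by
  obtain ⟨hZU, hUindep⟩ :=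
    indepFun_and_iIndepFun_of_pi_singleton_Iic hZmeas (fun k _ => hUmeas k) hindep
  have hunion : (Iic (⟨m - 1, by omega⟩ : Fin m)).biUnion G = univ := by
    ext i
    simpa [Fin.le_def, Nat.le_sub_one_of_lt] using hGcover i
  intro i
  simpa only [hunion, mem_univ, if_true] using online_hierarchical_sampling_exact_general hm ℓ G
    hGne hGdisj L hL Z hZmeas U (fun k _ => hUmeas k) hZlaw hUlaw hZU hUindep W hW0 hWrec
    ⟨m - 1, by omega⟩ i
end

section
/- (Distributed sampling over vocabulary shards.) Let V ≥ 1, let ℓ ∈ ℝ^V, and let S_0, …, S_{n-1} be a partition of {1, …, V} into nonempty shards with shard log-masses L_k = log Σ_{j∈S_k} exp(ℓ_j). Let Z_0, …, Z_{n-1}, γ_0, …, γ_{n-1} be mutually independent random variables such that each Z_k is distributed according to the softmax of ℓ restricted to S_k and each γ_k is distributed as Gumbel(0,1). Let K = argmax_k (L_k + γ_k) (unique almost surely). Then Z_K is distributed according to softmax(ℓ); that is, for every i ∈ {1, …, V}, P(Z_K = i) = exp(ℓ_i) / Σ_{j=1}^V exp(ℓ_j). -/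
open MeasureTheory

/-! By the Gumbel-max trick the shard index `K` is distributed according to the softmax of the
log-masses: given `γ k = t`, the other shards all lose with probability `exp (-c * exp (-t))` for an
explicit constant `c`, and `exp (-γ k)` is exponentially distributed. Since the token `Z k` is
independent of the Gumbel noise, it is drawn with probability `softmax(L) k * softmax(ℓ|S k) i`, and
the shard mass cancels in this product. -/

section

open ProbabilityTheory Set

section Softmax

variable {α ι : Type*}

/-- The softmax of `ℓ` restricted to the group `s`. The formula is meant for `i ∈ s`; it is not
replaced by `0` outside of `s`. -/
noncomputable def softmax (s : Finset α) (ℓ : α → ℝ) (i : α) : ℝ :=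
  Real.exp (ℓ i) / ∑ j ∈ s, Real.exp (ℓ j)

/-- The group log-mass of `s`; for empty `s` it takes the junk value `Real.log 0 = 0`. -/
noncomputable def logMass (s : Finset α) (ℓ : α → ℝ) : ℝ :=
  Real.log (∑ j ∈ s, Real.exp (ℓ j))

lemma softmax_nonneg (s : Finset α) (ℓ : α → ℝ) (i : α) : 0 ≤ softmax s ℓ i := by
  unfold softmax
  positivity

lemma exp_logMass {s : Finset α} (hs : s.Nonempty) (ℓ : α → ℝ) :
    Real.exp (logMass s ℓ) = ∑ j ∈ s, Real.exp (ℓ j) :=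
  Real.exp_log (Finset.sum_pos (fun _ _ => Real.exp_pos _) hs)

lemma sum_exp_logMass_of_partition [Fintype α] [Fintype ι] {S : ι → Finset α}
    (hne : ∀ k, (S k).Nonempty) (hdisj : Pairwise fun k l => Disjoint (S k) (S l))
    (hcover : ∀ i, ∃ k, i ∈ S k) (ℓ : α → ℝ) :
    ∑ k, Real.exp (logMass (S k) ℓ) = ∑ j, Real.exp (ℓ j) := by
  classical
  have hunion : Finset.univ.biUnion S = Finset.univ := by
    ext j
    simpa using hcover j
  simp only [exp_logMass (hne _)]
  rw [← Finset.sum_biUnion fun k _ l _ hkl => hdisj hkl, hunion]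

lemma softmax_mul_softmax_logMass [Fintype α] [Fintype ι] {S : ι → Finset α}
    (hne : ∀ k, (S k).Nonempty) (hdisj : Pairwise fun k l => Disjoint (S k) (S l))
    (hcover : ∀ i, ∃ k, i ∈ S k) (ℓ : α → ℝ) (k : ι) (i : α) :
    softmax (S k) ℓ i * softmax Finset.univ (fun s => logMass (S s) ℓ) k
      = softmax Finset.univ ℓ i := by
  simp only [softmax]
  rw [sum_exp_logMass_of_partition hne hdisj hcover, ← exp_logMass (hne k),
    div_mul_div_cancel₀ (Real.exp_ne_zero _)]

end Softmax

section Argmax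

variable {ι R : Type*}

/-- `k` is the unique maximizer of `f`. -/
def IsStrictArgmax [LT R] (f : ι → R) (k : ι) : Prop :=
  ∀ s, s ≠ k → f s < f k

lemma IsStrictArgmax.unique [Preorder R] {f : ι → R} {k l : ι} (hk : IsStrictArgmax f k)
    (hl : IsStrictArgmax f l) : k = l := by
  by_contra hne
  exact lt_asymm (hk l (Ne.symm hne)) (hl k hne)

lemma measurableSet_isStrictArgmax_add [Countable ι] (a : ι → ℝ) (k : ι) :
    MeasurableSet {x : ι → ℝ | IsStrictArgmax (a + x) k} := by
  simp only [IsStrictArgmax, ofPred_forall]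
  exact .iInter fun s => .iInter fun _ => measurableSet_lt (by fun_prop) (by fun_prop)

lemma ae_eq_inter_isStrictArgmax [Countable ι] [Preorder R] {Ω α : Type*} [MeasurableSpace Ω]
    {P : Measure Ω} {Z : ι → Ω → α} {f : Ω → ι → R} {K : Ω → ι} {k : ι} {i : α}
    (hK : ∀ᵐ ω ∂P, IsStrictArgmax (f ω) (K ω)) (hZ : ∀ s, s ≠ k → ∀ᵐ ω ∂P, Z s ω ≠ i) :
    ({ω | Z (K ω) ω = i} : Set Ω) =ᵐ[P]
      ({ω | Z k ω = i} ∩ {ω | IsStrictArgmax (f ω) k} : Set Ω) := by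
  have hZ' : ∀ᵐ ω ∂P, ∀ s, s ≠ k → Z s ω ≠ i :=
    ae_all_iff.2 fun s => Filter.eventually_imp_distrib_left.2 (hZ s)
  refine Filter.eventuallyEq_set.2 ?_
  filter_upwards [hK, hZ'] with ω hKω hZω
  constructor
  · intro hi
    have hKk : K ω = k := by
      by_contra hne
      exact hZω _ hne hi
    exact ⟨hKk ▸ hi, hKk ▸ hKω⟩
  · rintro ⟨hi, hk⟩
    exact (hKω.unique hk) ▸ hi

end Argmax

section Gumbel

/-- The standard Gumbel distribution, as the law of `-log (-log u)` for uniform `u`. -/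
noncomputable def gumbelMeasure : Measure ℝ :=
  (volume.restrict (Ioo 0 1)).map fun u => -Real.log (-Real.log u)

instance : IsProbabilityMeasure gumbelMeasure :=
  have : IsProbabilityMeasure (volume.restrict (Ioo (0 : ℝ) 1)) := ⟨by simp⟩
  Measure.isProbabilityMeasure_map (by fun_prop)

lemma neg_log_neg_log_le_iff {u : ℝ} (hu : u ∈ Ioo (0 : ℝ) 1) (t : ℝ) :
    -Real.log (-Real.log u) ≤ t ↔ u ≤ Real.exp (-Real.exp (-t)) := by
  have hlog : 0 < -Real.log u := neg_pos.2 (Real.log_neg hu.1 hu.2)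
  rw [neg_le, Real.le_log_iff_exp_le hlog, le_neg, Real.log_le_iff_le_exp hu.1]

lemma neg_log_neg_log_lt_iff {u : ℝ} (hu : u ∈ Ioo (0 : ℝ) 1) (t : ℝ) :
    -Real.log (-Real.log u) < t ↔ u < Real.exp (-Real.exp (-t)) := by
  have hlog : 0 < -Real.log u := neg_pos.2 (Real.log_neg hu.1 hu.2)
  rw [neg_lt, Real.lt_log_iff_exp_lt hlog, lt_neg, Real.log_lt_iff_lt_exp hu.1]

lemma exp_neg_exp_neg_lt_one (t : ℝ) : Real.exp (-Real.exp (-t)) < 1 :=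
  Real.exp_lt_one_iff.2 (neg_neg_of_pos (Real.exp_pos _))

lemma gumbelMeasure_Iic (t : ℝ) :
    gumbelMeasure (Iic t) = ENNReal.ofReal (Real.exp (-Real.exp (-t))) := by
  have hpre : (fun u => -Real.log (-Real.log u)) ⁻¹' Iic t ∩ Ioo 0 1
      = Ioc 0 (Real.exp (-Real.exp (-t))) := by
    ext u
    constructor
    · rintro ⟨hut, hu⟩
      exact ⟨hu.1, (neg_log_neg_log_le_iff hu t).1 hut⟩
    · rintro ⟨hu0, hut⟩
      have hu : u ∈ Ioo (0 : ℝ) 1 := ⟨hu0, hut.trans_lt (exp_neg_exp_neg_lt_one t)⟩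
      exact ⟨(neg_log_neg_log_le_iff hu t).2 hut, hu⟩
  rw [gumbelMeasure, Measure.map_apply (by fun_prop) measurableSet_Iic,
    Measure.restrict_apply (measurableSet_Iic.preimage (by fun_prop)), hpre, Real.volume_Ioc,
    sub_zero]

lemma gumbelMeasure_Iio (t : ℝ) :
    gumbelMeasure (Iio t) = ENNReal.ofReal (Real.exp (-Real.exp (-t))) := by
  have hpre : (fun u => -Real.log (-Real.log u)) ⁻¹' Iio t ∩ Ioo 0 1
      = Ioo 0 (Real.exp (-Real.exp (-t))) := by
    ext u
    constructor
    · rintro ⟨hut, hu⟩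
      exact ⟨hu.1, (neg_log_neg_log_lt_iff hu t).1 hut⟩
    · rintro ⟨hu0, hut⟩
      have hu : u ∈ Ioo (0 : ℝ) 1 := ⟨hu0, hut.trans (exp_neg_exp_neg_lt_one t)⟩
      exact ⟨(neg_log_neg_log_lt_iff hu t).2 hut, hu⟩
  rw [gumbelMeasure, Measure.map_apply (by fun_prop) measurableSet_Iio,
    Measure.restrict_apply (measurableSet_Iio.preimage (by fun_prop)), hpre, Real.volume_Ioo,
    sub_zero]

lemma hasLaw_gumbelMeasure_of_cdf {Ω : Type*} [MeasurableSpace Ω] {P : Measure Ω}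
    [IsFiniteMeasure P] {X : Ω → ℝ} (hX : Measurable X)
    (hcdf : ∀ t, P {ω | X ω ≤ t} = ENNReal.ofReal (Real.exp (-Real.exp (-t)))) :
    HasLaw X gumbelMeasure P where
  aemeasurable := hX.aemeasurable
  map_eq := by
    refine Measure.ext_of_Iic _ _ fun t => ?_
    rw [Measure.map_apply hX measurableSet_Iic, gumbelMeasure_Iic]
    exact hcdf t

lemma lintegral_Ioo_zero_one_rpow {c : ℝ} (hc : -1 < c) :
    ∫⁻ u in Ioo (0 : ℝ) 1, ENNReal.ofReal (u ^ c) = ENNReal.ofReal (1 / (1 + c)) := by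
  have hint : IntegrableOn (fun u : ℝ => u ^ c) (Ioo 0 1) :=
    (intervalIntegral.integrableOn_Ioo_rpow_iff one_pos).2 hc
  have hnonneg : 0 ≤ᵐ[volume.restrict (Ioo (0 : ℝ) 1)] fun u => u ^ c := by
    filter_upwards [ae_restrict_mem measurableSet_Ioo] with u hu
    exact Real.rpow_nonneg hu.1.le c
  rw [← ofReal_integral_eq_lintegral_ofReal hint hnonneg, ← integral_Ioc_eq_integral_Ioo,
    ← intervalIntegral.integral_of_le zero_le_one, integral_rpow (Or.inl hc), Real.one_rpow,
    Real.zero_rpow (by linarith), sub_zero, add_comm]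

/- If `X` is standard Gumbel then `exp (-X)` is exponential of rate `1`; this is its Laplace
transform. -/
lemma lintegral_gumbelMeasure_exp_neg_mul_exp_neg {c : ℝ} (hc : -1 < c) :
    ∫⁻ t, ENNReal.ofReal (Real.exp (-(c * Real.exp (-t)))) ∂gumbelMeasure
      = ENNReal.ofReal (1 / (1 + c)) := by
  rw [gumbelMeasure, lintegral_map (by fun_prop) (by fun_prop), ← lintegral_Ioo_zero_one_rpow hc]
  refine setLIntegral_congr_fun measurableSet_Ioo fun u hu => ?_
  have hlog : 0 < -Real.log u := neg_pos.2 (Real.log_neg hu.1 hu.2)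
  rw [neg_neg, Real.exp_log hlog, mul_neg, neg_neg, mul_comm, Real.rpow_def_of_pos hu.1]

end Gumbel

section GumbelMax

variable {ι : Type*}

lemma measure_pi_setOf_forall_ne_mem [Fintype ι] [DecidableEq ι] {X : ι → Type*}
    [∀ i, MeasurableSpace (X i)] (μ : ∀ i, Measure (X i)) [∀ i, SigmaFinite (μ i)] (k : ι)
    {s : ∀ j, X k → Set (X j)}
    (hs : ∀ j, j ≠ k → MeasurableSet {p : X k × X j | p.2 ∈ s j p.1}) :
    Measure.pi μ {x | ∀ j, j ≠ k → x j ∈ s j (x k)}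
      = ∫⁻ t, ∏ j ∈ Finset.univ.erase k, μ j (s j t) ∂μ k := by
  let B : Set ((∀ j : {j // j = k}, X j) × ∀ j : {j // j ≠ k}, X j) :=
    ⋂ j : {j // j ≠ k}, {p | p.2 j ∈ s j (p.1 ⟨k, rfl⟩)}
  have hB : MeasurableSet B := .iInter fun j => (hs j j.2).preimage
    (f := fun p : (∀ j : {j // j = k}, X j) × ∀ j : {j // j ≠ k}, X j => (p.1 ⟨k, rfl⟩, p.2 j))
    (by fun_prop)
  have hpre : {x | ∀ j, j ≠ k → x j ∈ s j (x k)}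
      = MeasurableEquiv.piEquivPiSubtypeProd X (· = k) ⁻¹' B := by
    ext x
    simp [B, MeasurableEquiv.piEquivPiSubtypeProd, Equiv.piEquivPiSubtypeProd]
  have hslice (y : ∀ j : {j // j = k}, X j) :
      Measure.pi (fun j : {j // j ≠ k} => μ j) (Prod.mk y ⁻¹' B)
        = ∏ j ∈ Finset.univ.erase k, μ j (s j (y ⟨k, rfl⟩)) := by
    have hbox : Prod.mk y ⁻¹' B = univ.pi fun j : {j // j ≠ k} => s j (y ⟨k, rfl⟩) := by
      ext z
      simp [B]
    rw [hbox, Measure.pi_pi]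
    exact (Finset.prod_subtype (p := (· ≠ k)) (Finset.univ.erase k) (by simp)
      fun j => μ j (s j (y ⟨k, rfl⟩))).symm
  have heval : MeasurePreserving (fun y : ∀ j : {j // j = k}, X j => y ⟨k, rfl⟩)
      (Measure.pi fun j => μ j) (μ k) :=
    measurePreserving_piUnique fun j : {j // j = k} => μ j
  have hmeas : Measurable fun t => ∏ j ∈ Finset.univ.erase k, μ j (s j t) :=
    Finset.measurable_prod _ fun j hj =>
      measurable_measure_prodMk_left (hs j (Finset.ne_of_mem_erase hj))
  have hsplit := measurePreserving_piEquivPiSubtypeProd μ (· = k)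
  -- `heval` and `hsplit` carry different `Fintype` instances on `{j // j = k}`.
  rw [Subsingleton.elim (Subtype.fintype fun j => j = k) (Fintype.subtypeEq k)] at hsplit
  rw [hpre, hsplit.measure_preimage hB.nullMeasurableSet, Measure.prod_apply hB,
    ← heval.lintegral_comp hmeas]
  exact lintegral_congr hslice

lemma prod_gumbelMeasure_Iio (J : Finset ι) (b : ι → ℝ) (t : ℝ) :
    ∏ j ∈ J, gumbelMeasure (Iio (t - b j))
      = ENNReal.ofReal (Real.exp (-((∑ j ∈ J, Real.exp (b j)) * Real.exp (-t)))) := by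
  simp only [gumbelMeasure_Iio]
  rw [← ENNReal.ofReal_prod_of_nonneg fun _ _ => (Real.exp_pos _).le, ← Real.exp_sum,
    Finset.sum_neg_distrib, Finset.sum_mul]
  refine congrArg (fun x => ENNReal.ofReal (Real.exp (-x))) (Finset.sum_congr rfl fun j _ => ?_)
  rw [← Real.exp_add, neg_sub, sub_eq_add_neg]

theorem pi_gumbelMeasure_isStrictArgmax_add [Fintype ι] (a : ι → ℝ) (k : ι) :
    Measure.pi (fun _ => gumbelMeasure) {x | IsStrictArgmax (a + x) k}
      = ENNReal.ofReal (softmax Finset.univ a k) := by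
  classical
  let c := ∑ j ∈ Finset.univ.erase k, Real.exp (a j - a k)
  have hc : 0 ≤ c := Finset.sum_nonneg fun _ _ => (Real.exp_pos _).le
  have hset : {x : ι → ℝ | IsStrictArgmax (a + x) k}
      = {x | ∀ j, j ≠ k → x j ∈ Iio (x k - (a j - a k))} := by
    ext x
    refine forall₂_congr fun j _ => ?_
    simp only [Pi.add_apply, mem_Iio]
    constructor <;> intro h <;> linarith
  have hmass : ∑ j, Real.exp (a j) = (1 + c) * Real.exp (a k) := by
    rw [add_mul, one_mul, Finset.sum_mul, ← Finset.add_sum_erase _ _ (Finset.mem_univ k)]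
    simp only [← Real.exp_add, sub_add_cancel]
  calc Measure.pi (fun _ => gumbelMeasure) {x | IsStrictArgmax (a + x) k}
      = ∫⁻ t, ∏ j ∈ Finset.univ.erase k, gumbelMeasure (Iio (t - (a j - a k))) ∂gumbelMeasure := by
        rw [hset]
        exact measure_pi_setOf_forall_ne_mem (fun _ => gumbelMeasure) k
          (s := fun j t => Iio (t - (a j - a k)))
          fun j _ => measurableSet_lt measurable_snd (by fun_prop)
    _ = ∫⁻ t, ENNReal.ofReal (Real.exp (-(c * Real.exp (-t)))) ∂gumbelMeasure := by
        simp only [prod_gumbelMeasure_Iio, c]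
    _ = ENNReal.ofReal (1 / (1 + c)) :=
        lintegral_gumbelMeasure_exp_neg_mul_exp_neg (by linarith)
    _ = ENNReal.ofReal (softmax Finset.univ a k) := by
        rw [softmax, hmass, div_mul_cancel_right₀ (Real.exp_ne_zero _), one_div]

theorem measure_isStrictArgmax_add_gumbel [Fintype ι] {Ω : Type*} [MeasurableSpace Ω]
    {P : Measure Ω} {γ : ι → Ω → ℝ} (hγ : ∀ k, HasLaw (γ k) gumbelMeasure P)
    (hindep : iIndepFun γ P)
    (a : ι → ℝ) (k : ι) :
    P {ω | IsStrictArgmax (fun s => a s + γ s ω) k}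
      = ENNReal.ofReal (softmax Finset.univ a k) :=
  ((hindep.hasLaw_pi hγ).measure_eq (measurableSet_isStrictArgmax_add a k)).trans
    (pi_gumbelMeasure_isStrictArgmax_add a k)

end GumbelMax

section ProductRule

lemma generateFrom_range_singleton {α : Type*} [Countable α] [m : MeasurableSpace α]
    [MeasurableSingletonClass α] :
    MeasurableSpace.generateFrom (range (singleton : α → Set α)) = m := by
  refine le_antisymm (MeasurableSpace.generateFrom_le ?_) fun s _ => ?_
  · rintro _ ⟨a, rfl⟩
    exact measurableSet_singleton a
  · have : @MeasurableSingletonClass α (.generateFrom (range singleton)) :=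
      @MeasurableSingletonClass.mk α (.generateFrom (range singleton))
        fun a => MeasurableSpace.measurableSet_generateFrom ⟨a, rfl⟩
    exact @Set.Countable.measurableSet α (.generateFrom (range singleton)) _ s s.to_countable

lemma isPiSystem_range_singleton (α : Type*) :
    IsPiSystem (range (singleton : α → Set α)) := by
  rintro _ ⟨a, rfl⟩ _ ⟨b, rfl⟩ ⟨_, rfl, rfl⟩
  exact ⟨_, (inter_self _).symm⟩

variable {κ : Type*} [Fintype κ]

lemma prod_pi_eq_of_singleton_prod_Iic {β : Type*} [Countable β] [MeasurableSpace β]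
    [MeasurableSingletonClass β] {μ : Measure β} [IsFiniteMeasure μ] {ν : κ → Measure ℝ}
    [∀ k, IsFiniteMeasure (ν k)] {ρ : Measure (β × (κ → ℝ))}
    (h : ∀ b t, ρ ({b} ×ˢ Iic t) = μ {b} * ∏ k, ν k (Iic (t k))) :
    μ.prod (Measure.pi ν) = ρ := by
  rcases isEmpty_or_nonempty β
  · exact Subsingleton.elim _ _
  obtain ⟨e, he⟩ := exists_surjective_nat β
  let points : μ.FiniteSpanningSetsIn (range singleton) :=
    { set := fun n => {e n}
      set_mem := fun n => ⟨e n, rfl⟩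
      finite := fun n => measure_lt_top μ _
      spanning := by simpa [← range_eq_iUnion] using he.range_eq }
  let rays (k : κ) : (ν k).FiniteSpanningSetsIn (range Iic) :=
    { set := fun n => Iic (n : ℝ)
      set_mem := fun n => ⟨n, rfl⟩
      finite := fun n => measure_lt_top (ν k) _
      spanning := iUnion_eq_univ_iff.2 exists_nat_ge }
  have hrays : MeasurableSpace.generateFrom (range Iic) = Real.measurableSpace :=
    (borel_eq_generateFrom_Iic ℝ).symm
  refine Measure.prod_eq_generateFrom generateFrom_range_singleton
    (generateFrom_eq_pi (fun _ => hrays) fun k => (rays k).isCountablySpanning)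
    (isPiSystem_range_singleton β) (.pi fun _ => isPiSystem_Iic) points (.pi rays) ?_
  rintro _ ⟨b, rfl⟩ _ ⟨s, hs, rfl⟩
  choose t ht using fun k => hs k (mem_univ k)
  obtain rfl : (fun k => Iic (t k)) = s := funext ht
  rw [pi_univ_Iic, h, ← pi_univ_Iic, Measure.pi_pi]

variable {ι Ω : Type*} [Fintype ι] [MeasurableSpace Ω] {P : Measure Ω}
  {α : ι → Type*} [∀ k, MeasurableSpace (α k)] [∀ k, MeasurableSingletonClass (α k)]
  [∀ k, Countable (α k)] {Z : ∀ k, Ω → α k} {γ : κ → Ω → ℝ}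

lemma hasLaw_prodMk_of_point_ray_product_rule [IsFiniteMeasure P]
    (hZ : ∀ k, Measurable (Z k)) (hγ : ∀ k, Measurable (γ k))
    (h : ∀ (z : ∀ k, α k) (t : κ → ℝ), P {ω | (∀ k, Z k ω = z k) ∧ ∀ k, γ k ω ≤ t k}
      = (∏ k, P {ω | Z k ω = z k}) * ∏ k, P {ω | γ k ω ≤ t k}) :
    HasLaw (fun ω => (fun k => Z k ω, fun k => γ k ω))
      ((Measure.pi fun k => P.map (Z k)).prod (Measure.pi fun k => P.map (γ k))) P where
  map_eq := by
    refine (prod_pi_eq_of_singleton_prod_Iic fun z t => ?_).symm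
    rw [Measure.map_apply (by fun_prop) ((measurableSet_singleton z).prod measurableSet_Iic),
      Measure.pi_singleton]
    simp only [Measure.map_apply (hZ _) (measurableSet_singleton _),
      Measure.map_apply (hγ _) measurableSet_Iic]
    refine (congrArg P ?_).trans (h z t)
    ext ω
    simp [funext_iff, Pi.le_def]

lemma iIndepFun_of_point_ray_product_rule [IsProbabilityMeasure P]
    (hZ : ∀ k, Measurable (Z k)) (hγ : ∀ k, Measurable (γ k))
    (h : ∀ (z : ∀ k, α k) (t : κ → ℝ), P {ω | (∀ k, Z k ω = z k) ∧ ∀ k, γ k ω ≤ t k}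
      = (∏ k, P {ω | Z k ω = z k}) * ∏ k, P {ω | γ k ω ≤ t k}) :
    iIndepFun γ P := by
  have (k : ι) := Measure.isProbabilityMeasure_map (μ := P) (hZ k).aemeasurable
  have (k : κ) := Measure.isProbabilityMeasure_map (μ := P) (hγ k).aemeasurable
  have hjoint := hasLaw_prodMk_of_point_ray_product_rule hZ hγ h
  exact (iIndepFun_iff_map_fun_eq_pi_map fun k => (hγ k).aemeasurable).2
    (measurePreserving_snd.fun_comp_hasLaw hjoint).map_eq

lemma indepFun_of_point_ray_product_rule [IsProbabilityMeasure P]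
    (hZ : ∀ k, Measurable (Z k)) (hγ : ∀ k, Measurable (γ k))
    (h : ∀ (z : ∀ k, α k) (t : κ → ℝ), P {ω | (∀ k, Z k ω = z k) ∧ ∀ k, γ k ω ≤ t k}
      = (∏ k, P {ω | Z k ω = z k}) * ∏ k, P {ω | γ k ω ≤ t k}) :
    IndepFun (fun ω k => Z k ω) (fun ω k => γ k ω) P := by
  have (k : ι) := Measure.isProbabilityMeasure_map (μ := P) (hZ k).aemeasurable
  have (k : κ) := Measure.isProbabilityMeasure_map (μ := P) (hγ k).aemeasurable
  have hjoint := hasLaw_prodMk_of_point_ray_product_rule hZ hγ h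
  exact (indepFun_iff_hasLaw_prodMk_prod (measurePreserving_fst.fun_comp_hasLaw hjoint)
    (measurePreserving_snd.fun_comp_hasLaw hjoint)).2 hjoint

end ProductRule

theorem distributed_shard_sampling_exact_general
    {Ω ι α : Type*} [MeasurableSpace Ω] {P : Measure Ω} [Finite ι] [Fintype α] [DecidableEq α]
    [MeasurableSpace α] [MeasurableSingletonClass α] (ℓ : α → ℝ)
    (S : ι → Finset α) (hSne : ∀ k, (S k).Nonempty)
    (hSdisj : Pairwise fun k l => Disjoint (S k) (S l)) (hScover : ∀ i, ∃ k, i ∈ S k)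
    (Z : ι → Ω → α)
    (hZlaw : ∀ k i, P {ω | Z k ω = i}
      = if i ∈ S k then ENNReal.ofReal (softmax (S k) ℓ i) else 0)
    (γ : ι → Ω → ℝ) (hγlaw : ∀ k, HasLaw (γ k) gumbelMeasure P) (hγindep : iIndepFun γ P)
    (hZγindep : ∀ k, IndepFun (Z k) (fun ω s => γ s ω) P)
    (K : Ω → ι) (hK : ∀ᵐ ω ∂P, IsStrictArgmax (fun s => logMass (S s) ℓ + γ s ω) (K ω))
    (i : α) :
    P {ω | Z (K ω) ω = i} = ENNReal.ofReal (softmax Finset.univ ℓ i) := by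
  cases nonempty_fintype ι
  obtain ⟨k, hik⟩ := hScover i
  let L (s : ι) : ℝ := logMass (S s) ℓ
  have hZne (s : ι) (hs : s ≠ k) : ∀ᵐ ω ∂P, Z s ω ≠ i := by
    have his : i ∉ S s := Finset.disjoint_right.1 (hSdisj hs) hik
    simpa [ae_iff, his] using hZlaw s i
  calc P {ω | Z (K ω) ω = i}
      = P ({ω | Z k ω = i} ∩ {ω | IsStrictArgmax (fun s => L s + γ s ω) k}) :=
        measure_congr (ae_eq_inter_isStrictArgmax hK hZne)
    _ = P {ω | Z k ω = i} * P {ω | IsStrictArgmax (fun s => L s + γ s ω) k} :=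
        (hZγindep k).measure_inter_preimage_eq_mul {i} {x | IsStrictArgmax (L + x) k}
          (measurableSet_singleton i) (measurableSet_isStrictArgmax_add L k)
    _ = ENNReal.ofReal (softmax (S k) ℓ i) * ENNReal.ofReal (softmax Finset.univ L k) := by
        rw [hZlaw, if_pos hik, measure_isStrictArgmax_add_gumbel hγlaw hγindep]
    _ = ENNReal.ofReal (softmax Finset.univ ℓ i) := by
        rw [← ENNReal.ofReal_mul (softmax_nonneg _ _ _),
          softmax_mul_softmax_logMass hSne hSdisj hScover]

end

/-- **Distributed sampling over vocabulary shards.** Let `S 0, …, S (n-1)` be a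
partition of the index set into nonempty shards with log-masses
`L k = log ∑ j ∈ S k, exp (ℓ j)`. Let `Z 0, …, Z (n-1)` (each distributed as the
softmax of `ℓ` restricted to `S k`) and `γ 0, …, γ (n-1)` (each standard Gumbel, CDF
`t ↦ exp (-exp (-t))`) be mutually independent (independence expressed by the product
rule on point events for the `Z k` and rays for the `γ k`, which characterizes mutual
independence here). Let `K = argmax_k (L k + γ k)` (unique almost surely). Then `Z K`
is distributed according to `softmax ℓ`. -/
theorem distributed_shard_sampling_exact
    {Ω : Type*} [MeasurableSpace Ω] {P : Measure Ω} [IsProbabilityMeasure P]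
    {V n : ℕ} (hV : 1 ≤ V) (ℓ : Fin V → ℝ)
    (S : Fin n → Finset (Fin V)) (hSne : ∀ k, (S k).Nonempty)
    (hSdisj : Pairwise fun k l => Disjoint (S k) (S l))
    (hScover : ∀ i : Fin V, ∃ k, i ∈ S k)
    (L : Fin n → ℝ) (hL : ∀ k, L k = Real.log (∑ j ∈ S k, Real.exp (ℓ j)))
    (Z : Fin n → Ω → Fin V) (hZmeas : ∀ k, Measurable (Z k))
    (γ : Fin n → Ω → ℝ) (hγmeas : ∀ k, Measurable (γ k))
    (hZlaw : ∀ k, ∀ i : Fin V, P {ω | Z k ω = i}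
      = if i ∈ S k then ENNReal.ofReal (Real.exp (ℓ i) / ∑ j ∈ S k, Real.exp (ℓ j)) else 0)
    (hγlaw : ∀ k, ∀ t : ℝ, P {ω | γ k ω ≤ t} = ENNReal.ofReal (Real.exp (-Real.exp (-t))))
    (hindep : ∀ (z : Fin n → Fin V) (t : Fin n → ℝ),
      P {ω | (∀ k, Z k ω = z k) ∧ ∀ k, γ k ω ≤ t k}
        = (∏ k : Fin n, P {ω | Z k ω = z k}) * ∏ k : Fin n, P {ω | γ k ω ≤ t k})
    (K : Ω → Fin n) (hKmeas : Measurable K)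
    (hK : ∀ᵐ ω ∂P, ∀ s : Fin n, s ≠ K ω → L s + γ s ω < L (K ω) + γ (K ω) ω) :
    ∀ i : Fin V, P {ω | Z (K ω) ω = i}
      = ENNReal.ofReal (Real.exp (ℓ i) / ∑ j : Fin V, Real.exp (ℓ j)) := by
  obtain rfl : L = fun k => logMass (S k) ℓ := funext hL
  exact distributed_shard_sampling_exact_general ℓ S hSne hSdisj hScover Z hZlaw γ
    (fun k => hasLaw_gumbelMeasure_of_cdf (hγmeas k) (hγlaw k))
    (iIndepFun_of_point_ray_product_rule hZmeas hγmeas hindep)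
    (fun k => (indepFun_of_point_ray_product_rule hZmeas hγmeas hindep).comp
      (measurable_pi_apply k) measurable_id) K hK
end
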